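/- Let q be a prime such that p = 4q + 1 is also prime, and let D be a nontrivial difference set in the additive group ZMod p with parameter λ satisfying 2·|D| < p. Then either |D| = q and 4λ = q − 1, or |D| = q + 1 and 4λ = q + 1. -/

import Mathlib

/-- A subset `D` of the additive group `ZMod p` is a difference set with parameter `lam`
(a positive integer) if every nonzero `g : ZMod p` has exactly `lam` representations
`g = d₂ - d₁` with `d₁, d₂ ∈ D`. -/
def IsDiffSetZMod (p : ℕ) (D : Finset (ZMod p)) (lam : ℕ) : Prop :=
  0 < lam ∧ ∀ g : ZMod p, g ≠ 0 →
    ((D ×ˢ D).filter (fun x => x.2 - x.1 = g)).card = lam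

/-!
Sorting the ordered pairs of distinct elements of a difference set `D` by their difference gives
`k (k - 1) = λ (v - 1)`, where `k = |D|` and `v` is the order of the group. For `v = 4q + 1` with
`q` a prime power, `q` therefore divides one of the coprime numbers `k` and `k - 1`. As `k ≤ 2q`,
the only multiples of `q` available are `k = q`, `k = 2q` and `k - 1 = q`, and `k = 2q` would make
the odd number `2q - 1` equal to `2λ`.
-/

section DifferenceSet

variable {G : Type*} [AddGroup G] [DecidableEq G] {D : Finset G} {lam : ℕ}

/-- Difference sets with parameter `lam` in an arbitrary additive group, not necessarily
commutative. The value `lam = 0` is allowed. -/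
def IsDifferenceSet (D : Finset G) (lam : ℕ) : Prop :=
  ∀ g : G, g ≠ 0 → ((D ×ˢ D).filter (fun x => x.2 - x.1 = g)).card = lam

theorem filter_offDiag_sub_eq (D : Finset G) {g : G} (hg : g ≠ 0) :
    D.offDiag.filter (fun x => x.2 - x.1 = g) =
      (D ×ˢ D).filter (fun x => x.2 - x.1 = g) := by
  ext ⟨a, b⟩
  simp only [Finset.mem_filter, Finset.mem_offDiag, Finset.mem_product]
  have ne_of_sub_eq (h : b - a = g) : a ≠ b := fun hab =>
    hg (by rw [← h, hab, sub_self])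
  tauto

theorem IsDifferenceSet.card_mul_card_sub_one [Finite G] (hD : IsDifferenceSet D lam) :
    D.card * (D.card - 1) = (Nat.card G - 1) * lam := by
  have := Fintype.ofFinite G
  have sub_mem : ∀ x ∈ D.offDiag, x.2 - x.1 ∈ Finset.univ.erase (0 : G) := fun x hx =>
    Finset.mem_erase.mpr
      ⟨sub_ne_zero.mpr (Finset.mem_offDiag.mp hx).2.2.symm, Finset.mem_univ _⟩
  calc D.card * (D.card - 1)
      = D.offDiag.card := by rw [Finset.offDiag_card, Nat.mul_sub_one]
    _ = ∑ g ∈ Finset.univ.erase (0 : G), (D.offDiag.filter (fun x => x.2 - x.1 = g)).card :=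
        Finset.card_eq_sum_card_fiberwise sub_mem
    _ = ∑ _g ∈ Finset.univ.erase (0 : G), lam := Finset.sum_congr rfl fun g hg => by
        have hg : g ≠ 0 := Finset.ne_of_mem_erase hg
        rw [filter_offDiag_sub_eq D hg, hD g hg]
    _ = (Nat.card G - 1) * lam := by
        rw [Finset.sum_const, Finset.card_erase_of_mem (Finset.mem_univ _), Finset.card_univ,
          Nat.card_eq_fintype_card, smul_eq_mul]

end DifferenceSet

section Arithmetic

variable {q k m lam : ℕ}

theorem eq_and_four_mul_eq_sub_one_of_dvd (hk : 0 < k) (hkq : k ≤ 2 * q)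
    (h : k * (k - 1) = 4 * q * lam) (hdvd : q ∣ k) : k = q ∧ 4 * lam = q - 1 := by
  have hq : 0 < q := Nat.pos_of_dvd_of_pos hdvd hk
  obtain ⟨c, rfl⟩ := hdvd
  have hc : c ≤ 2 := Nat.le_of_mul_le_mul_left (by linarith) hq
  have hlam : c * (q * c - 1) = 4 * lam :=
    Nat.eq_of_mul_eq_mul_left hq (by linarith)
  have hc_pos : 0 < c := Nat.pos_of_mul_pos_left hk
  have hc_ne_two : c ≠ 2 := by
    rintro rfl
    have hodd : q * 2 = 2 * lam + 1 := by omega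
    exact Nat.two_mul_ne_two_mul_add_one ((mul_comm 2 q).trans hodd)
  obtain rfl : c = 1 := by omega
  rw [mul_one, one_mul] at hlam
  exact ⟨mul_one q, hlam.symm⟩

theorem eq_and_four_mul_eq_succ_of_dvd (hm : 0 < m) (hmq : m < 2 * q)
    (h : (m + 1) * m = 4 * q * lam) (hdvd : q ∣ m) : m = q ∧ 4 * lam = q + 1 := by
  obtain rfl : m = q := by
    obtain ⟨c, rfl⟩ := hdvd
    have hc : c < 2 := Nat.lt_of_mul_lt_mul_left (by linarith : q * c < q * 2)
    interval_cases c <;> omega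
  exact ⟨rfl, Nat.eq_of_mul_eq_mul_left hm (by linarith)⟩

theorem eq_or_eq_succ_of_mul_sub_one_eq (hq : IsPrimePow q) (hlam : 0 < lam) (hkq : k ≤ 2 * q)
    (h : k * (k - 1) = 4 * q * lam) :
    (k = q ∧ 4 * lam = q - 1) ∨ (k = q + 1 ∧ 4 * lam = q + 1) := by
  have hk : 0 < k * (k - 1) := h ▸ Nat.mul_pos (Nat.mul_pos four_pos hq.pos) hlam
  obtain ⟨m, rfl⟩ := Nat.exists_eq_add_one.mpr (Nat.pos_of_mul_pos_right hk)
  have hdvd : q ∣ (m + 1) * m := ⟨4 * lam, by rw [Nat.add_sub_cancel] at h; linarith⟩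
  have hcop : (m + 1).Coprime m := by simp
  rcases (hcop.isPrimePow_dvd_mul hq).mp hdvd with hdvd | hdvd
  · exact .inl (eq_and_four_mul_eq_sub_one_of_dvd m.succ_pos hkq h hdvd)
  · obtain ⟨rfl, h4⟩ :=
      eq_and_four_mul_eq_succ_of_dvd (Nat.pos_of_mul_pos_left hk) hkq h hdvd
    exact .inr ⟨rfl, h4⟩

end Arithmetic

theorem diff_set_4q_add_one_parameters_general {G : Type*} [AddGroup G] [DecidableEq G]
    {q lam : ℕ} (hq : IsPrimePow q) (hG : Nat.card G = 4 * q + 1)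
    {D : Finset G} (hD : IsDifferenceSet D lam) (hlam : 0 < lam)
    (hsmall : 2 * D.card < Nat.card G) :
    (D.card = q ∧ 4 * lam = q - 1) ∨ (D.card = q + 1 ∧ 4 * lam = q + 1) := by
  have : Finite G := Nat.finite_of_card_ne_zero (by omega)
  have hcount : D.card * (D.card - 1) = 4 * q * lam := by
    rw [hD.card_mul_card_sub_one, hG, Nat.add_sub_cancel]
  exact eq_or_eq_succ_of_mul_sub_one_eq hq hlam (by omega) hcount

/-- If `q` is a prime such that `p = 4q + 1` is also prime, then every nontrivial
difference set `D` in `ZMod p` with `2|D| < p` satisfies either `|D| = q` and `4λ = q - 1`,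
or `|D| = q + 1` and `4λ = q + 1`. -/
theorem diff_set_4q_add_one_parameters (q p : ℕ) (hq : q.Prime)
    (hpdef : p = 4 * q + 1) (hp : p.Prime)
    (D : Finset (ZMod p)) (lam : ℕ) (hD : IsDiffSetZMod p D lam)
    (hnt1 : 2 ≤ D.card) (hnt2 : D.card ≤ p - 2) (hsmall : 2 * D.card < p) :
    (D.card = q ∧ 4 * lam = q - 1) ∨ (D.card = q + 1 ∧ 4 * lam = q + 1) :=
  diff_set_4q_add_one_parameters_general hq.isPrimePow ((Nat.card_zmod p).trans hpdef) hD.2 hD.1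
    (hsmall.trans_eq (Nat.card_zmod p).symm)
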